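/- For every real number r > 0, the double integral 4·∫₀^r ∫₀^r sinh²(r₁)·sinh²(r₂)·sinh²((r₁−r₂)/2)·sinh²((r₁+r₂)/2) dr₁ dr₂ is at most 32·cosh²(r)·sinh⁴(r). -/

import Mathlib

open Real

theorem aux_integral (r : ℝ) : ∫ x in (0:ℝ)..r, Real.sinh x * Real.cosh x = Real.sinh r ^ 2 / 2 := by
  have h : ∀ x ∈ Set.uIcc 0 r, HasDerivAt (fun x => Real.sinh x ^ 2 / 2) (Real.sinh x * Real.cosh x) x := by
    intro x _
    have := ((Real.hasDerivAt_sinh x).pow 2).div_const 2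
    exact this.congr_deriv (by push_cast; ring)
  rw [intervalIntegral.integral_eq_sub_of_hasDerivAt h
    (Continuous.intervalIntegrable (by fun_prop) _ _)]
  simp

theorem aux_pointwise (r a b : ℝ) (ha : 0 ≤ a) (har : a ≤ r) (hb : 0 ≤ b) (hbr : b ≤ r) :
    Real.sinh a ^ 2 * Real.sinh b ^ 2 *
          Real.sinh ((a - b) / 2) ^ 2 * Real.sinh ((a + b) / 2) ^ 2 ≤
      (Real.cosh r ^ 2 * (Real.sinh a * Real.cosh a)) * (Real.sinh b * Real.cosh b) := by
  have key : Real.sinh ((a - b) / 2) * Real.sinh ((a + b) / 2) = (Real.cosh a - Real.cosh b) / 2 := by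
    have h1 : a = (a + b) / 2 + (a - b) / 2 := by ring
    have h2 : b = (a + b) / 2 - (a - b) / 2 := by ring
    have e1 := Real.cosh_add ((a + b) / 2) ((a - b) / 2)
    have e2 := Real.cosh_sub ((a + b) / 2) ((a - b) / 2)
    rw [← h1] at e1
    rw [← h2] at e2
    rw [e1, e2]; ring
  have sa : 0 ≤ Real.sinh a := Real.sinh_nonneg_iff.2 ha
  have sb : 0 ≤ Real.sinh b := Real.sinh_nonneg_iff.2 hb
  have ca := Real.cosh_pos a
  have cb := Real.cosh_pos b
  have car : Real.cosh a ≤ Real.cosh r := by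
    rw [Real.cosh_le_cosh, abs_of_nonneg ha, abs_of_nonneg (ha.trans har)]; exact har
  have cbr : Real.cosh b ≤ Real.cosh r := by
    rw [Real.cosh_le_cosh, abs_of_nonneg hb, abs_of_nonneg (hb.trans hbr)]; exact hbr
  have hA : Real.sinh a ^ 2 ≤ Real.sinh a * Real.cosh a := by
    rw [sq]; exact mul_le_mul_of_nonneg_left (Real.sinh_lt_cosh a).le sa
  have hB : Real.sinh b ^ 2 ≤ Real.sinh b * Real.cosh b := by
    rw [sq]; exact mul_le_mul_of_nonneg_left (Real.sinh_lt_cosh b).le sb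
  have hC : ((Real.cosh a - Real.cosh b) / 2) ^ 2 ≤ Real.cosh r ^ 2 := by
    apply sq_le_sq'  <;> linarith
  calc _ = (Real.sinh a ^ 2 * Real.sinh b ^ 2) *
        (Real.sinh ((a - b) / 2) * Real.sinh ((a + b) / 2)) ^ 2 := by ring
    _ = (Real.sinh a ^ 2 * Real.sinh b ^ 2) * ((Real.cosh a - Real.cosh b) / 2) ^ 2 := by rw [key]
    _ ≤ ((Real.sinh a * Real.cosh a) * (Real.sinh b * Real.cosh b)) * Real.cosh r ^ 2 := by gcongr
    _ = _ := by ring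

/-- Proposition 1 (genus-2 volume bound): for every real `r > 0`, the double integral
`4·∫₀^r ∫₀^r sinh²(r₁)·sinh²(r₂)·sinh²((r₁−r₂)/2)·sinh²((r₁+r₂)/2) dr₁ dr₂`
is at most `32·cosh²(r)·sinh⁴(r)`. -/
theorem stmt_0 (r : ℝ) (hr : 0 < r) :
    4 * ∫ r₁ in (0:ℝ)..r, ∫ r₂ in (0:ℝ)..r,
        Real.sinh r₁ ^ 2 * Real.sinh r₂ ^ 2 *
          Real.sinh ((r₁ - r₂) / 2) ^ 2 * Real.sinh ((r₁ + r₂) / 2) ^ 2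
      ≤ 32 * Real.cosh r ^ 2 * Real.sinh r ^ 4 := by
  have main : ∫ r₁ in (0:ℝ)..r, ∫ r₂ in (0:ℝ)..r,
        Real.sinh r₁ ^ 2 * Real.sinh r₂ ^ 2 *
          Real.sinh ((r₁ - r₂) / 2) ^ 2 * Real.sinh ((r₁ + r₂) / 2) ^ 2 ≤
      ∫ r₁ in (0:ℝ)..r, (Real.cosh r ^ 2 * (Real.sinh r ^ 2 / 2)) * (Real.sinh r₁ * Real.cosh r₁) := by
    apply intervalIntegral.integral_mono_on hr.le
    · apply Continuous.intervalIntegrable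
      apply intervalIntegral.continuous_parametric_intervalIntegral_of_continuous'
      simp only [Function.uncurry_def]
      fun_prop
    · exact Continuous.intervalIntegrable (by fun_prop) _ _
    · intro a ha
      calc _ ≤ ∫ b in (0:ℝ)..r, (Real.cosh r ^ 2 * (Real.sinh a * Real.cosh a)) *
            (Real.sinh b * Real.cosh b) := by
            apply intervalIntegral.integral_mono_on hr.le
            · exact Continuous.intervalIntegrable (by fun_prop) _ _
            · exact Continuous.intervalIntegrable (by fun_prop) _ _
            · intro b hb
              exact aux_pointwise r a b ha.1 ha.2 hb.1 hb.2
        _ = _ := by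
            rw [intervalIntegral.integral_const_mul, aux_integral]; ring
  rw [intervalIntegral.integral_const_mul, aux_integral] at main
  have : 0 ≤ Real.cosh r ^ 2 * Real.sinh r ^ 4 := by positivity
  nlinarith
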